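/- arXiv:1601.07113 — 2 statements merged into one kernel-verified Lean document; each statement's English description precedes it below -/
import Mathlib

section
/- Let α > 3, β > 0, t₀ > 0, let Φ : H → ℝ be convex and twice continuously differentiable with argmin Φ nonempty, and let x : [t₀, ∞) → H be a solution of (DIN-AVD). Then t²(Φ(x(t)) − min Φ) → 0 and t‖ẋ(t) + β∇Φ(x(t))‖ → 0 as t → ∞. -/
open Filter MeasureTheory Set
open scoped Topology RealInnerProductSpace

variable {H : Type*} [NormedAddCommGroup H] [InnerProductSpace ℝ H] [CompleteSpace H]

/-- `x`, together with its first and second derivatives `x'`, `x''`, is a twice continuously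
differentiable solution of (DIN-AVD) on `[t₀, ∞)`:
`ẍ(t) + (α/t) ẋ(t) + β ∇²Φ(x(t)) ẋ(t) + ∇Φ(x(t)) = 0`. -/
def IsDINAVDSolution (α β t₀ : ℝ) (Φ : H → ℝ) (x x' x'' : ℝ → H) : Prop :=
  (∀ t ∈ Set.Ici t₀, HasDerivAt x (x' t) t) ∧
  (∀ t ∈ Set.Ici t₀, HasDerivAt x' (x'' t) t) ∧
  ContinuousOn x'' (Set.Ici t₀) ∧
  ∀ t ∈ Set.Ici t₀,
    x'' t + (α / t) • x' t + β • (fderiv ℝ (gradient Φ) (x t)) (x' t)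
      + gradient Φ (x t) = 0

/-!
In terms of `v = ẋ + β∇Φ(x)` the equation is the first-order system `ẋ = v - β∇Φ(x)`,
`v̇ = -(α/t)ẋ - ∇Φ(x)`, in which no Hessian occurs. The energies
`E_l = (t² + β(α-2-l)t)(Φ(x) - min Φ) + ½‖l(x - x*) + tv‖² + ½l(α-1-l)‖x - x*‖²`
depend affinely on `l`, are eventually nonnegative for `0 ≤ l ≤ α - 1`, and satisfy
`Ė_l ≤ -(k/t) E_0` for large `t` and some `k > 0` as soon as `2 < l < α - 1`, an interval which is
nonempty exactly when `α > 3`. Two such `E_l` converge, hence so does `E_0`, by extrapolation.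
Its limit must vanish, since otherwise `E_l` would decrease at least like a multiple of `-log t`.
Finally `E_0` dominates both `t²(Φ(x) - min Φ)` and `½(t‖v‖)²`.
-/

section Convexity

variable {V : Type*} [NormedAddCommGroup V] [NormedSpace ℝ V]

lemma fderiv_apply_sub_le_sub_of_convexOn {s : Set V} {f : V → ℝ} {f' : V →L[ℝ] ℝ} {a b : V}
    (hf : ConvexOn ℝ s f) (ha : a ∈ s) (hb : b ∈ s) (hf' : HasFDerivAt f f' a) :
    f' (b - a) ≤ f b - f a := by
  have hline : ConvexOn ℝ (AffineMap.lineMap a b ⁻¹' s) (f ∘ (AffineMap.lineMap a b : ℝ → V)) :=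
    hf.comp_affineMap (AffineMap.lineMap a b : ℝ →ᵃ[ℝ] V)
  have hderiv : HasDerivAt (f ∘ (AffineMap.lineMap a b : ℝ → V)) (f' (b - a)) 0 :=
    HasFDerivAt.comp_hasDerivAt 0 (by simpa using hf') AffineMap.hasDerivAt_lineMap
  simpa [slope_def_field] using
    hline.le_slope_of_hasDerivAt (by simpa using ha) (by simpa using hb) one_pos hderiv

end Convexity

section RealLimits

lemma exists_tendsto_of_antitoneOn_Ici {ι R : Type*} [SemilatticeSup ι]
    [ConditionallyCompleteLinearOrder R] [TopologicalSpace R] [OrderTopology R]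
    {f : ι → R} {a : ι} (hf : AntitoneOn f (Ici a)) (hbdd : BddBelow (f '' Ici a)) :
    ∃ L, Tendsto f atTop (𝓝 L) := by
  have hrestrict : Antitone ((Ici a).domRestrict f) := antitoneOn_iff_antitone.1 hf
  rw [← range_domRestrict] at hbdd
  exact ⟨_, tendsto_comp_val_Ici_atTop.1 (tendsto_atTop_ciInf hrestrict hbdd)⟩

lemma exists_tendsto_of_eventually_deriv_nonpos {f : ℝ → ℝ} {c : ℝ}
    (hf : ∀ᶠ t in atTop, DifferentiableAt ℝ f t ∧ deriv f t ≤ 0) (hc : ∀ᶠ t in atTop, c ≤ f t) :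
    ∃ L, Tendsto f atTop (𝓝 L) := by
  obtain ⟨T, hT⟩ := eventually_atTop.1 (hf.and hc)
  refine exists_tendsto_of_antitoneOn_Ici (a := T) ?_
    ⟨c, forall_mem_image.2 fun t ht => (hT t ht).2⟩
  exact antitoneOn_of_deriv_nonpos (convex_Ici T)
    (fun t ht => (hT t ht).1.1.continuousAt.continuousWithinAt)
    (fun t ht => (hT t (interior_subset ht)).1.1.differentiableWithinAt)
    (fun t ht => (hT t (interior_subset ht)).1.2)

lemma limit_nonpos_of_deriv_le_neg_mul_div {f w : ℝ → ℝ} {c k L : ℝ} (hk : 0 < k)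
    (hf : ∀ᶠ t in atTop, DifferentiableAt ℝ f t ∧ deriv f t ≤ -(k * (w t / t)))
    (hc : ∀ᶠ t in atTop, c ≤ f t) (hw : Tendsto w atTop (𝓝 L)) : L ≤ 0 := by
  by_contra! hL
  set F : ℝ → ℝ := fun t => f t + k * (L / 2) * Real.log t
  have hF_atTop : Tendsto F atTop atTop :=
    tendsto_atTop_add_left_of_le' _ c hc
      (Real.tendsto_log_atTop.const_mul_atTop (by positivity))
  have hF_deriv : ∀ᶠ t in atTop, DifferentiableAt ℝ F t ∧ deriv F t ≤ 0 := by
    filter_upwards [hf, hw.eventually_const_lt (half_lt_self hL), eventually_gt_atTop 0]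
      with t ⟨hdiff, hderiv⟩ hwt ht
    have hF : HasDerivAt F (deriv f t + k * (L / 2) * t⁻¹) t :=
      hdiff.hasDerivAt.add ((Real.hasDerivAt_log ht.ne').const_mul _)
    refine ⟨hF.differentiableAt, ?_⟩
    have hlog : k * (L / 2) * t⁻¹ ≤ k * (w t / t) := by
      rw [mul_assoc, ← div_eq_mul_inv]
      gcongr
    rw [hF.deriv]
    linarith
  obtain ⟨M, hM⟩ :=
    exists_tendsto_of_eventually_deriv_nonpos hF_deriv (hF_atTop.eventually_ge_atTop 0)
  exact not_tendsto_nhds_of_tendsto_atTop hF_atTop M hM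

end RealLimits

section FirstOrderSystem

variable {E : Type*} [NormedAddCommGroup E] [InnerProductSpace ℝ E]
  {α β l k t : ℝ} {Φ : E → ℝ} {g : E → E} {xs : E} {x v : ℝ → E}

/-- The first-order form of (DIN-AVD) at time `t`, for a vector field `g` in the role of `∇Φ`; the
auxiliary unknown is `v = ẋ + β g(x)`, so that the Hessian term of (DIN-AVD) is part of `v̇`. -/
structure IsFirstOrderSolutionAt (α β : ℝ) (g : E → E) (x v : ℝ → E) (t : ℝ) : Prop where
  hasDerivAt_fst : HasDerivAt x (v t - β • g (x t)) t
  hasDerivAt_snd : HasDerivAt v (-((α / t) • (v t - β • g (x t))) - g (x t)) t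

/-- The energy `E_l` along a curve `(x, v)`, anchored at the point `xs`. It is a Lyapunov function
of the first-order system, for large times, if `2 < l < α - 1`, while `E_0` is the quantity shown to
tend to zero. -/
noncomputable def lyapunov (α β l : ℝ) (Φ : E → ℝ) (xs : E) (x v : ℝ → E) (t : ℝ) : ℝ :=
  (t ^ 2 + β * (α - 2 - l) * t) * (Φ (x t) - Φ xs)
    + 1 / 2 * ‖l • (x t - xs) + t • v t‖ ^ 2
    + l * (α - 1 - l) / 2 * ‖x t - xs‖ ^ 2

lemma lyapunov_zero : lyapunov α β 0 Φ xs x v t =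
    (t ^ 2 + β * (α - 2) * t) * (Φ (x t) - Φ xs) + 1 / 2 * (t * ‖v t‖) ^ 2 := by
  simp [lyapunov, norm_smul, mul_pow]

-- The terms of degree two in `l` cancel between the two squared norms.
lemma lyapunov_eq_zero_add_mul (l : ℝ) : lyapunov α β l Φ xs x v t = lyapunov α β 0 Φ xs x v t
    + l * ((α - 1) / 2 * ‖x t - xs‖ ^ 2 + t * ⟪x t - xs, v t⟫ - β * t * (Φ (x t) - Φ xs)) := by
  rw [lyapunov_zero, lyapunov, norm_add_sq_real, norm_smul, norm_smul, real_inner_smul_left,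
    real_inner_smul_right, mul_pow, mul_pow, Real.norm_eq_abs, Real.norm_eq_abs, sq_abs, sq_abs]
  ring

lemma lyapunov_nonneg (hl : 0 ≤ l) (hlα : l ≤ α - 1) (ht : 0 ≤ t) (htβ : -(β * (α - 2 - l)) ≤ t)
    (hmin : Φ xs ≤ Φ (x t)) : 0 ≤ lyapunov α β l Φ xs x v t := by
  have hweight : 0 ≤ t ^ 2 + β * (α - 2 - l) * t := by nlinarith
  have hgap : 0 ≤ Φ (x t) - Φ xs := sub_nonneg.2 hmin
  have hcoeff : 0 ≤ α - 1 - l := sub_nonneg.2 hlα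
  exact add_nonneg (add_nonneg (mul_nonneg hweight hgap) (by positivity))
    (mul_nonneg (div_nonneg (mul_nonneg hl hcoeff) zero_le_two) (sq_nonneg _))

lemma eventually_lyapunov_nonneg (hl : 0 ≤ l) (hlα : l ≤ α - 1) (hmin : ∀ y, Φ xs ≤ Φ y) :
    ∀ᶠ t in atTop, 0 ≤ lyapunov α β l Φ xs x v t := by
  filter_upwards [eventually_ge_atTop 0, eventually_ge_atTop (-(β * (α - 2 - l)))] with t ht htβ
  exact lyapunov_nonneg hl hlα ht htβ (hmin _)

lemma hasDerivAt_smul_sub_add_smul (hsol : IsFirstOrderSolutionAt α β g x v t) (ht : t ≠ 0) :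
    HasDerivAt (fun s => l • (x s - xs) + s • v s)
      (-((α - 1 - l) • (v t - β • g (x t)) + (t - β) • g (x t))) t := by
  refine (((hsol.hasDerivAt_fst.sub_const xs).const_smul l).add
    ((hasDerivAt_id t).smul hsol.hasDerivAt_snd)).congr_deriv ?_
  have hcancel : t • (α / t) • (v t - β • g (x t)) = α • (v t - β • g (x t)) := by
    rw [smul_smul, mul_div_cancel₀ _ ht]
  simp only [id, smul_sub t, smul_neg, hcancel]
  module

lemma hasDerivAt_lyapunov (hΦ : HasFDerivAt Φ (innerSL ℝ (g (x t))) (x t))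
    (hsol : IsFirstOrderSolutionAt α β g x v t) (ht : t ≠ 0) :
    HasDerivAt (lyapunov α β l Φ xs x v)
      ((2 * t + β * (α - 2 - l)) * (Φ (x t) - Φ xs) - l * (t - β) * ⟪g (x t), x t - xs⟫
        - (α - 1 - l) * t * ‖v t - β • g (x t)‖ ^ 2 - (t - β) * t * β * ‖g (x t)‖ ^ 2) t := by
  have hx := hsol.hasDerivAt_fst.sub_const xs
  have hgap : HasDerivAt (fun s => Φ (x s) - Φ xs) ⟪g (x t), v t - β • g (x t)⟫ t :=
    (hΦ.comp_hasDerivAt t hsol.hasDerivAt_fst).sub_const _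
  have hweight : HasDerivAt (fun s => s ^ 2 + β * (α - 2 - l) * s) (2 * t + β * (α - 2 - l)) t :=
    ((hasDerivAt_pow 2 t).add ((hasDerivAt_id t).const_mul (β * (α - 2 - l)))).congr_deriv (by simp)
  refine (((hweight.mul hgap).add
    ((hasDerivAt_smul_sub_add_smul hsol ht).norm_sq.const_mul (1 / 2))).add
    (hx.norm_sq.const_mul (l * (α - 1 - l) / 2))).congr_deriv ?_
  obtain ⟨p, hp⟩ : ∃ p, v t = p + β • g (x t) := ⟨_, (sub_add_cancel _ _).symm⟩
  simp only [hp, add_sub_cancel_right, inner_add_left, inner_add_right, inner_neg_right,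
    real_inner_smul_left, real_inner_smul_right, smul_add, real_inner_self_eq_norm_sq]
  rw [real_inner_comm p (g (x t)), real_inner_comm (x t - xs) (g (x t))]
  ring

lemma norm_sq_le_two_mul_norm_sub_smul_sq (β : ℝ) (u w : E) :
    ‖u‖ ^ 2 ≤ 2 * (‖u - β • w‖ ^ 2 + β ^ 2 * ‖w‖ ^ 2) := by
  calc ‖u‖ ^ 2 ≤ (‖u - β • w‖ + ‖β • w‖) ^ 2 := by gcongr; exact norm_le_norm_sub_add _ _
    _ ≤ 2 * (‖u - β • w‖ ^ 2 + ‖β • w‖ ^ 2) := add_sq_le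
    _ = 2 * (‖u - β • w‖ ^ 2 + β ^ 2 * ‖w‖ ^ 2) := by
      rw [norm_smul, mul_pow, Real.norm_eq_abs, sq_abs]

lemma deriv_lyapunov_le (hβ : 0 ≤ β) (hl : 0 ≤ l) (hk : 0 ≤ k) (hkl : k + l ≤ α - 1) (ht : 0 < t)
    (htβ : (1 + k) * β ≤ t) (htα : (1 + k) * (β * (α - 2)) ≤ (l - 2 - k) * t)
    (hΦ : HasFDerivAt Φ (innerSL ℝ (g (x t))) (x t)) (hmin : Φ xs ≤ Φ (x t))
    (hstar : Φ (x t) - Φ xs ≤ ⟪g (x t), x t - xs⟫) (hsol : IsFirstOrderSolutionAt α β g x v t) :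
    deriv (lyapunov α β l Φ xs x v) t ≤ -(k * (lyapunov α β 0 Φ xs x v t / t)) := by
  have hquot : lyapunov α β 0 Φ xs x v t / t =
      (t + β * (α - 2)) * (Φ (x t) - Φ xs) + 1 / 2 * t * ‖v t‖ ^ 2 := by
    rw [lyapunov_zero]
    field_simp
  have hgap : 0 ≤ ((l - 2 - k) * t - (1 + k) * (β * (α - 2))) * (Φ (x t) - Φ xs) :=
    mul_nonneg (sub_nonneg.2 htα) (sub_nonneg.2 hmin)
  have hinner : l * (t - β) * (Φ (x t) - Φ xs) ≤ l * (t - β) * ⟪g (x t), x t - xs⟫ :=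
    mul_le_mul_of_nonneg_left hstar (mul_nonneg hl (by nlinarith))
  have hvel : 0 ≤ (α - 1 - l - k) * (t * ‖v t - β • g (x t)‖ ^ 2) :=
    mul_nonneg (by linarith) (by positivity)
  have hgrad : 0 ≤ (t - (1 + k) * β) * (t * β * ‖g (x t)‖ ^ 2) :=
    mul_nonneg (sub_nonneg.2 htβ) (by positivity)
  have hv := mul_le_mul_of_nonneg_left (norm_sq_le_two_mul_norm_sub_smul_sq β (v t) (g (x t)))
    (show 0 ≤ k * (1 / 2 * t) by positivity)
  rw [(hasDerivAt_lyapunov hΦ hsol ht.ne').deriv, hquot]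
  linarith

lemma exists_eventually_deriv_lyapunov_le (hβ : 0 ≤ β) (hl : 2 < l) (hlα : l < α - 1)
    (hΦ : ∀ y, HasFDerivAt Φ (innerSL ℝ (g y)) y) (hmin : ∀ y, Φ xs ≤ Φ y)
    (hstar : ∀ y, Φ y - Φ xs ≤ ⟪g y, y - xs⟫)
    (hsol : ∀ᶠ t in atTop, IsFirstOrderSolutionAt α β g x v t) :
    ∃ k > 0, ∀ᶠ t in atTop, DifferentiableAt ℝ (lyapunov α β l Φ xs x v) t ∧
      deriv (lyapunov α β l Φ xs x v) t ≤ -(k * (lyapunov α β 0 Φ xs x v t / t)) := by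
  obtain ⟨k, hk, hk_lt⟩ := exists_between (lt_min (sub_pos.2 hl) (sub_pos.2 hlα))
  obtain ⟨hkl, hkα⟩ := lt_min_iff.1 hk_lt
  refine ⟨k, hk, ?_⟩
  filter_upwards [hsol, eventually_gt_atTop 0, eventually_ge_atTop ((1 + k) * β),
    (tendsto_id.const_mul_atTop (sub_pos.2 hkl)).eventually_ge_atTop ((1 + k) * (β * (α - 2)))]
    with t hsol_t ht htβ htα
  exact ⟨(hasDerivAt_lyapunov (hΦ _) hsol_t ht.ne').differentiableAt,
    deriv_lyapunov_le hβ (by linarith) hk.le (by linarith) ht htβ htα (hΦ _) (hmin _) (hstar _)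
      hsol_t⟩

lemma exists_tendsto_lyapunov (hβ : 0 ≤ β) (hl : 2 < l) (hlα : l < α - 1)
    (hΦ : ∀ y, HasFDerivAt Φ (innerSL ℝ (g y)) y) (hmin : ∀ y, Φ xs ≤ Φ y)
    (hstar : ∀ y, Φ y - Φ xs ≤ ⟪g y, y - xs⟫)
    (hsol : ∀ᶠ t in atTop, IsFirstOrderSolutionAt α β g x v t) :
    ∃ L, Tendsto (lyapunov α β l Φ xs x v) atTop (𝓝 L) := by
  obtain ⟨k, hk, hdecay⟩ := exists_eventually_deriv_lyapunov_le hβ hl hlα hΦ hmin hstar hsol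
  refine exists_tendsto_of_eventually_deriv_nonpos ?_
    (eventually_lyapunov_nonneg (zero_le_two.trans hl.le) hlα.le hmin)
  have hα : 0 ≤ α - 1 := by linarith
  filter_upwards [hdecay, eventually_ge_atTop 0,
    eventually_lyapunov_nonneg le_rfl hα hmin] with t ⟨hdiff, hderiv⟩ ht h₀
  have hdissip : 0 ≤ k * (lyapunov α β 0 Φ xs x v t / t) := by positivity
  exact ⟨hdiff, hderiv.trans (neg_nonpos.2 hdissip)⟩

lemma exists_tendsto_lyapunov_zero {m : ℝ} (hlm : l ≠ m)
    (hl : ∃ L, Tendsto (lyapunov α β l Φ xs x v) atTop (𝓝 L))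
    (hm : ∃ L, Tendsto (lyapunov α β m Φ xs x v) atTop (𝓝 L)) :
    ∃ L, Tendsto (lyapunov α β 0 Φ xs x v) atTop (𝓝 L) := by
  obtain ⟨L, hL⟩ := hl
  obtain ⟨M, hM⟩ := hm
  refine ⟨_, (((hM.const_mul l).sub (hL.const_mul m)).div_const (l - m)).congr fun t => ?_⟩
  rw [lyapunov_eq_zero_add_mul l, lyapunov_eq_zero_add_mul m, div_eq_iff (sub_ne_zero.2 hlm)]
  ring

lemma tendsto_lyapunov_zero (hα : 3 < α) (hβ : 0 ≤ β)
    (hΦ : ∀ y, HasFDerivAt Φ (innerSL ℝ (g y)) y) (hmin : ∀ y, Φ xs ≤ Φ y)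
    (hstar : ∀ y, Φ y - Φ xs ≤ ⟪g y, y - xs⟫)
    (hsol : ∀ᶠ t in atTop, IsFirstOrderSolutionAt α β g x v t) :
    Tendsto (lyapunov α β 0 Φ xs x v) atTop (𝓝 0) := by
  obtain ⟨l, hl, hlα⟩ := exists_between (show 2 < α - 1 by linarith)
  obtain ⟨m, hlm, hmα⟩ := exists_between hlα
  obtain ⟨L, hL⟩ := exists_tendsto_lyapunov_zero hlm.ne
    (exists_tendsto_lyapunov hβ hl hlα hΦ hmin hstar hsol)
    (exists_tendsto_lyapunov hβ (hl.trans hlm) hmα hΦ hmin hstar hsol)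
  have hL_nonneg : 0 ≤ L :=
    ge_of_tendsto hL (eventually_lyapunov_nonneg le_rfl (by linarith) hmin)
  obtain ⟨k, hk, hdecay⟩ := exists_eventually_deriv_lyapunov_le hβ hl hlα hΦ hmin hstar hsol
  have hL_nonpos : L ≤ 0 := limit_nonpos_of_deriv_le_neg_mul_div hk hdecay
    (eventually_lyapunov_nonneg (by linarith) hlα.le hmin) hL
  rwa [hL_nonpos.antisymm hL_nonneg] at hL

lemma sq_mul_sub_le_lyapunov_zero (hα : 2 ≤ α) (hβ : 0 ≤ β) (ht : 0 ≤ t)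
    (hmin : Φ xs ≤ Φ (x t)) :
    t ^ 2 * (Φ (x t) - Φ xs) ≤ lyapunov α β 0 Φ xs x v t := by
  have hrest : 0 ≤ β * (α - 2) * t * (Φ (x t) - Φ xs) + 1 / 2 * (t * ‖v t‖) ^ 2 := by
    have := sub_nonneg.2 hα
    have := sub_nonneg.2 hmin
    positivity
  rw [lyapunov_zero]
  linarith

lemma mul_norm_le_sqrt_two_mul_lyapunov_zero (hα : 2 ≤ α) (hβ : 0 ≤ β) (ht : 0 ≤ t)
    (hmin : Φ xs ≤ Φ (x t)) :
    t * ‖v t‖ ≤ √(2 * lyapunov α β 0 Φ xs x v t) := by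
  have hrest : 0 ≤ (t ^ 2 + β * (α - 2) * t) * (Φ (x t) - Φ xs) := by
    have := sub_nonneg.2 hα
    have := sub_nonneg.2 hmin
    positivity
  refine Real.le_sqrt_of_sq_le ?_
  rw [lyapunov_zero]
  linarith

end FirstOrderSystem

section Gradient

lemma hasFDerivAt_innerSL_gradient {Φ : H → ℝ} {a : H} (hΦ : DifferentiableAt ℝ Φ a) :
    HasFDerivAt Φ (innerSL ℝ (gradient Φ a)) a :=
  hΦ.hasGradientAt.hasFDerivAt

lemma sub_le_inner_gradient_of_convexOn {s : Set H} {Φ : H → ℝ} {a b : H}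
    (hconv : ConvexOn ℝ s Φ) (ha : a ∈ s) (hb : b ∈ s) (hΦ : DifferentiableAt ℝ Φ a) :
    Φ a - Φ b ≤ ⟪gradient Φ a, a - b⟫ := by
  have h := fderiv_apply_sub_le_sub_of_convexOn hconv ha hb (hasFDerivAt_innerSL_gradient hΦ)
  rw [innerSL_apply_apply, ← neg_sub a b, inner_neg_right] at h
  linarith

lemma differentiable_gradient {Φ : H → ℝ} (hΦ : ContDiff ℝ 2 Φ) : Differentiable ℝ (gradient Φ) :=
  (InnerProductSpace.toDual ℝ H).symm.toContinuousLinearEquiv.differentiable.comp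
    ((hΦ.fderiv_right (m := 1) (by norm_num)).differentiable one_ne_zero)

lemma IsDINAVDSolution.isFirstOrderSolutionAt {α β t₀ t : ℝ} {Φ : H → ℝ} {x x' x'' : ℝ → H}
    (hsol : IsDINAVDSolution α β t₀ Φ x x' x'') (hΦ : Differentiable ℝ (gradient Φ))
    (ht : t₀ ≤ t) :
    IsFirstOrderSolutionAt α β (gradient Φ) x (fun s => x' s + β • gradient Φ (x s)) t := by
  obtain ⟨hx, hx', -, hode⟩ := hsol
  have hgrad : HasDerivAt (fun s => gradient Φ (x s))
      (fderiv ℝ (gradient Φ) (x t) (x' t)) t :=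
    (hΦ (x t)).hasFDerivAt.comp_hasDerivAt t (hx t ht)
  constructor
  · simpa using hx t ht
  · refine ((hx' t ht).add (hgrad.const_smul β)).congr_deriv ?_
    rw [add_sub_cancel_right, eq_sub_iff_add_eq, eq_neg_iff_add_eq_zero, ← hode t ht]
    abel

end Gradient

theorem stmt10_general {E : Type*} [NormedAddCommGroup E] [InnerProductSpace ℝ E]
    {α β : ℝ} (hα : 3 < α) (hβ : 0 ≤ β) {Φ : E → ℝ} {g : E → E}
    (hΦ : ∀ y, HasFDerivAt Φ (innerSL ℝ (g y)) y) {xs : E} (hmin : ∀ y, Φ xs ≤ Φ y)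
    (hstar : ∀ y, Φ y - Φ xs ≤ ⟪g y, y - xs⟫) {x v : ℝ → E}
    (hsol : ∀ᶠ t in atTop, IsFirstOrderSolutionAt α β g x v t) :
    Tendsto (fun t => t ^ 2 * (Φ (x t) - Φ xs)) atTop (𝓝 0) ∧
    Tendsto (fun t => t * ‖v t‖) atTop (𝓝 0) := by
  have hα₂ : 2 ≤ α := by linarith
  have hlim := tendsto_lyapunov_zero hα hβ hΦ hmin hstar hsol
  have hsqrt : Tendsto (fun t => √(2 * lyapunov α β 0 Φ xs x v t)) atTop (𝓝 0) := by
    simpa using (hlim.const_mul 2).sqrt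
  have ht := eventually_ge_atTop (0 : ℝ)
  exact ⟨squeeze_zero'
      (.of_forall fun t => mul_nonneg (sq_nonneg t) (sub_nonneg.2 (hmin (x t))))
      (ht.mono fun t ht => sq_mul_sub_le_lyapunov_zero hα₂ hβ ht (hmin _)) hlim,
    squeeze_zero' (ht.mono fun t ht => mul_nonneg ht (norm_nonneg _))
      (ht.mono fun t ht => mul_norm_le_sqrt_two_mul_lyapunov_zero hα₂ hβ ht (hmin _)) hsqrt⟩

theorem stmt10 (α β t₀ : ℝ) (hα : 3 < α) (hβ : 0 < β) (ht₀ : 0 < t₀)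
    (Φ : H → ℝ) (hconv : ConvexOn ℝ Set.univ Φ) (hΦ : ContDiff ℝ 2 Φ)
    (xstar : H) (hmin : ∀ z, Φ xstar ≤ Φ z)
    (x x' x'' : ℝ → H) (hsol : IsDINAVDSolution α β t₀ Φ x x' x'') :
    Tendsto (fun t => t ^ 2 * (Φ (x t) - Φ xstar)) atTop (𝓝 0) ∧
    Tendsto (fun t => t * ‖x' t + β • gradient Φ (x t)‖) atTop (𝓝 0) := by
  have hd : Differentiable ℝ Φ := hΦ.differentiable two_ne_zero
  exact stmt10_general hα hβ.le (fun y => hasFDerivAt_innerSL_gradient (hd y)) hmin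
    (fun y => sub_le_inner_gradient_of_convexOn hconv (mem_univ y) (mem_univ xstar) (hd y))
    ((eventually_ge_atTop t₀).mono fun _ =>
      hsol.isFirstOrderSolutionAt (differentiable_gradient hΦ))
end

section
/- Let α > 3, β > 0, t₀ > 0, let Φ : H → ℝ be convex and twice continuously differentiable such that the interior of argmin Φ is nonempty, and let x : [t₀, ∞) → H be a solution of (DIN-AVD). Then there exists x* ∈ argmin Φ such that x(t) converges strongly to x* as t → ∞, and moreover ∫_{t₀}^∞ t‖∇Φ(x(t))‖ dt < ∞. -/
open Filter MeasureTheory Set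
open scoped Topology RealInnerProductSpace

variable {H : Type*} [NormedAddCommGroup H] [InnerProductSpace ℝ H] [CompleteSpace H]

/-!
Along a solution, the curve `w(t) = t ẋ(t) + (α - 1) x(t) + β t ∇Φ(x(t))` satisfies
`ẇ(t) = (β - t) ∇Φ(x(t))`: the Hessian term has been integrated away. For a minimizer `z`, the
energy `t (t - β) (Φ(x(t)) - Φ(z)) + ½ ‖w(t) - (α - 1) z‖²` therefore decreases for large `t`, at a
rate of at least `½ (α - 3) t ⟪x(t) - z, ∇Φ(x(t))⟫`. If `Φ` is minimal on a ball of radius `ρ`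
around `z`, convexity gives `⟪x - z, ∇Φ(x)⟫ ≥ ρ ‖∇Φ(x)‖`, so `t ‖∇Φ(x(t))‖` is integrable. Hence
`w` converges. Since `t ẏ + a y → a l` forces `y → l` for `a > 0`, applying this to
`y(t) = x(t) + β ∫ ∇Φ(x(s)) ds` shows that `x` converges, and by integrability its limit is a
critical point of `Φ`.
-/

section ConvexGradient

theorem fderiv_apply_sub_le_of_convexOn {E : Type*} [NormedAddCommGroup E] [NormedSpace ℝ E]
    {s : Set E} {f : E → ℝ} {p q : E} (hf : ConvexOn ℝ s f) (hp : p ∈ s) (hq : q ∈ s)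
    (hfp : DifferentiableAt ℝ f p) : fderiv ℝ f p (q - p) ≤ f q - f p := by
  have hconv : ConvexOn ℝ (AffineMap.lineMap p q ⁻¹' s) (f ∘ AffineMap.lineMap (k := ℝ) p q) :=
    hf.comp_affineMap _
  have hderiv : HasDerivAt (f ∘ AffineMap.lineMap p q) (fderiv ℝ f p (q - p)) (0 : ℝ) := by
    refine HasFDerivAt.comp_hasDerivAt _ ?_ AffineMap.hasDerivAt_lineMap
    simpa only [AffineMap.lineMap_apply_zero] using hfp.hasFDerivAt
  simpa [slope_def_field] using
    hconv.le_slope_of_hasDerivAt (by simpa using hp) (by simpa using hq) one_pos hderiv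

variable {Φ : H → ℝ} {p : H}

theorem inner_gradient_sub_le_of_convexOn {s : Set H} {q : H} (hΦ : ConvexOn ℝ s Φ) (hp : p ∈ s)
    (hq : q ∈ s) (hΦp : DifferentiableAt ℝ Φ p) : ⟪gradient Φ p, q - p⟫ ≤ Φ q - Φ p := by
  rw [inner_gradient_left]
  exact fderiv_apply_sub_le_of_convexOn hΦ hp hq hΦp

theorem sub_le_inner_sub_gradient_of_convexOn {s : Set H} {q : H} (hΦ : ConvexOn ℝ s Φ)
    (hp : p ∈ s) (hq : q ∈ s) (hΦp : DifferentiableAt ℝ Φ p) :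
    Φ p - Φ q ≤ ⟪p - q, gradient Φ p⟫ := by
  have h := inner_gradient_sub_le_of_convexOn hΦ hp hq hΦp
  rw [← neg_sub p q, inner_neg_right, real_inner_comm] at h
  linarith

theorem le_of_convexOn_of_gradient_eq_zero {s : Set H} {q : H} (hΦ : ConvexOn ℝ s Φ) (hp : p ∈ s)
    (hq : q ∈ s) (hΦp : DifferentiableAt ℝ Φ p) (hgrad : gradient Φ p = 0) : Φ p ≤ Φ q := by
  simpa [hgrad] using inner_gradient_sub_le_of_convexOn hΦ hp hq hΦp

theorem mul_norm_gradient_le_inner_of_convexOn {s : Set H} {z : H} {ρ : ℝ} (hΦ : ConvexOn ℝ s Φ)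
    (hp : p ∈ s) (hΦp : DifferentiableAt ℝ Φ p) (hρ : 0 ≤ ρ) (hball : Metric.closedBall z ρ ⊆ s)
    (hmin : ∀ q ∈ Metric.closedBall z ρ, Φ q ≤ Φ p) :
    ρ * ‖gradient Φ p‖ ≤ ⟪p - z, gradient Φ p⟫ := by
  set g := gradient Φ p
  -- the point of the ball that is furthest in the direction of the gradient
  let q := z + (ρ / ‖g‖) • g
  have hq : q ∈ Metric.closedBall z ρ := by
    have hself : ρ / ‖g‖ * ‖g‖ ≤ ρ := by
      rw [div_mul_eq_mul_div, mul_div_assoc]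
      exact mul_le_of_le_one_right hρ (div_self_le_one _)
    simpa [q, norm_smul, abs_of_nonneg hρ] using hself
  have hinner : ⟪p - q, g⟫ = ⟪p - z, g⟫ - ρ * ‖g‖ := by
    rw [← sub_sub, inner_sub_left, real_inner_smul_left, real_inner_self_eq_norm_mul_norm,
      div_mul_eq_mul_div, mul_div_assoc, mul_self_div_self]
  linarith [hmin q hq, sub_le_inner_sub_gradient_of_convexOn hΦ hp (hball hq) hΦp]

theorem differentiable_gradient_of_contDiff_two (hΦ : ContDiff ℝ 2 Φ) :
    Differentiable ℝ (gradient Φ) :=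
  (InnerProductSpace.toDual ℝ H).symm.differentiable.comp
    ((hΦ.fderiv_right (m := 1) one_add_one_eq_two.le).differentiable one_ne_zero)

end ConvexGradient

section ImproperIntegral

variable {E : Type*} [NormedAddCommGroup E]

theorem integrableOn_Ioi_of_le_neg_deriv {T : ℝ} {V V' f : ℝ → ℝ}
    (hV : ∀ t ∈ Ici T, HasDerivAt V (V' t) t) (hV₀ : ∀ t ∈ Ici T, 0 ≤ V t)
    (hf : ContinuousOn f (Ici T)) (hf₀ : ∀ t ∈ Ici T, 0 ≤ f t) (hfV : ∀ t ∈ Ici T, f t ≤ -V' t) :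
    IntegrableOn f (Ioi T) := by
  have hfint (t : ℝ) : IntegrableOn f (Icc T t) := (hf.mono Icc_subset_Ici_self).integrableOn_Icc
  refine integrableOn_Ioi_of_intervalIntegral_norm_bounded (V T) T
    (fun t => (hfint t).mono_set Ioc_subset_Icc_self) tendsto_id ?_
  filter_upwards [eventually_ge_atTop T] with t ht
  calc ∫ s in T..t, ‖f s‖ = ∫ s in T..t, f s :=
        intervalIntegral.integral_congr fun s hs =>
          Real.norm_of_nonneg (hf₀ s (uIcc_of_le ht ▸ hs).1)
    _ ≤ -V t - -V T :=
        intervalIntegral.integral_le_sub_of_hasDeriv_right_of_le ht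
          (fun s hs => (hV s hs.1).neg.continuousAt.continuousWithinAt)
          (fun s hs => (hV s hs.1.le).neg.hasDerivWithinAt) (hfint t) fun s hs => hfV s hs.1.le
    _ ≤ V T := by linarith [hV₀ t ht]

theorem integrableOn_Ioi_of_mul_norm {T : ℝ} {f : ℝ → E} (hT : 0 < T)
    (hf : AEStronglyMeasurable f (volume.restrict (Ioi T)))
    (hint : IntegrableOn (fun t => t * ‖f t‖) (Ioi T)) : IntegrableOn f (Ioi T) := by
  refine Integrable.mono' (hint.const_mul T⁻¹) hf ?_
  filter_upwards [ae_restrict_mem measurableSet_Ioi] with t ht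
  rw [← div_eq_inv_mul, le_div_iff₀' hT]
  exact mul_le_mul_of_nonneg_right (le_of_lt ht) (norm_nonneg _)

theorem integrableOn_Ioi_smul_of_mul_norm {T : ℝ} {f : ℝ → E} [NormedSpace ℝ E] (hT : 0 ≤ T)
    (hf : AEStronglyMeasurable f (volume.restrict (Ioi T)))
    (hint : IntegrableOn (fun t => t * ‖f t‖) (Ioi T)) :
    IntegrableOn (fun t => t • f t) (Ioi T) := by
  refine Integrable.mono' hint (aestronglyMeasurable_id.smul hf) ?_
  filter_upwards [ae_restrict_mem measurableSet_Ioi] with t ht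
  rw [norm_smul, Real.norm_of_nonneg (hT.trans (le_of_lt ht))]

end ImproperIntegral

section EulerOperator

variable {E : Type*} [NormedAddCommGroup E] [NormedSpace ℝ E] {y y' : ℝ → E} {a : ℝ}

theorem norm_le_of_norm_smul_deriv_add_smul_le {C S t : ℝ} (hS : 0 < S)
    (hy : ∀ s ∈ Icc S t, HasDerivAt y (y' s) s)
    (hC : ∀ s ∈ Icc S t, ‖s • y' s + a • y s‖ ≤ a * C) (hSt : S ≤ t) :
    ‖y t‖ ≤ (S / t) ^ a * (‖y S‖ - C) + C := by
  have hpos {s : ℝ} (hs : s ∈ Icc S t) : 0 < s := hS.trans_le hs.1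
  have hpow {s : ℝ} (hs : s ∈ Icc S t) : HasDerivAt (· ^ a) (a * s ^ (a - 1)) s :=
    Real.hasDerivAt_rpow_const (.inl (hpos hs).ne')
  have hlhs {s : ℝ} (hs : s ∈ Icc S t) :
      HasDerivAt (fun s => s ^ a • y s) (s ^ a • y' s + (a * s ^ (a - 1)) • y s) s :=
    (hpow hs).smul (hy s hs)
  have hrhs {s : ℝ} (hs : s ∈ Icc S t) :
      HasDerivAt (fun s => S ^ a * (‖y S‖ - C) + C * s ^ a) (C * (a * s ^ (a - 1))) s :=
    ((hpow hs).const_mul C).const_add _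
  have hbound : ‖t ^ a • y t‖ ≤ S ^ a * (‖y S‖ - C) + C * t ^ a := by
    refine image_norm_le_of_norm_deriv_right_le_deriv_boundary'
      (fun s hs => (hlhs hs).continuousAt.continuousWithinAt)
      (fun s hs => (hlhs (Ico_subset_Icc_self hs)).hasDerivWithinAt) ?_
      (fun s hs => (hrhs hs).continuousAt.continuousWithinAt)
      (fun s hs => (hrhs (Ico_subset_Icc_self hs)).hasDerivWithinAt) ?_ (right_mem_Icc.2 hSt)
    · rw [norm_smul, Real.norm_of_nonneg (by positivity)]
      linarith
    · intro s hs
      have hs₀ := hpos (Ico_subset_Icc_self hs)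
      have hfactor :
          s ^ a • y' s + (a * s ^ (a - 1)) • y s = s ^ (a - 1) • (s • y' s + a • y s) := by
        rw [smul_add, smul_smul, smul_smul, ← Real.rpow_add_one hs₀.ne', sub_add_cancel, mul_comm a]
      calc ‖s ^ a • y' s + (a * s ^ (a - 1)) • y s‖ = s ^ (a - 1) * ‖s • y' s + a • y s‖ := by
            rw [hfactor, norm_smul, Real.norm_of_nonneg (by positivity)]
        _ ≤ s ^ (a - 1) * (a * C) :=
            mul_le_mul_of_nonneg_left (hC s (Ico_subset_Icc_self hs)) (by positivity)
        _ = C * (a * s ^ (a - 1)) := by ring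
  have ht : 0 < t := hS.trans_le hSt
  rw [norm_smul, Real.norm_of_nonneg (by positivity), ← le_div_iff₀' (by positivity)] at hbound
  refine hbound.trans_eq ?_
  rw [Real.div_rpow hS.le ht.le]
  field_simp

theorem tendsto_of_tendsto_smul_deriv_add_smul {l : E} (ha : 0 < a)
    (hy : ∀ᶠ t in atTop, HasDerivAt y (y' t) t)
    (hlim : Tendsto (fun t => t • y' t + a • y t) atTop (𝓝 (a • l))) :
    Tendsto y atTop (𝓝 l) := by
  rw [Metric.tendsto_nhds]
  intro ε hε
  have hsmall := Metric.tendsto_nhds.1 hlim (a * (ε / 2)) (by positivity)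
  obtain ⟨S, hS⟩ := eventually_atTop.1 (hy.and (hsmall.and (eventually_gt_atTop 0)))
  have hbound : ∀ t ≥ S, ‖y t - l‖ ≤ (S / t) ^ a * (‖y S - l‖ - ε / 2) + ε / 2 := by
    intro t ht
    refine norm_le_of_norm_smul_deriv_add_smul_le (y := fun s => y s - l) (hS S le_rfl).2.2
      (fun s hs => (hS s hs.1).1.sub_const l) (fun s hs => ?_) ht
    rw [smul_sub, ← add_sub_assoc, ← dist_eq_norm]
    exact (hS s hs.1).2.1.le
  have hdecay : Tendsto (fun t => (S / t) ^ a * (‖y S - l‖ - ε / 2) + ε / 2) atTop (𝓝 (ε / 2)) := by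
    have hpow := (tendsto_id.const_div_atTop S).rpow_const (p := a) (.inr ha.le)
    simpa [Real.zero_rpow ha.ne'] using (hpow.mul_const (‖y S - l‖ - ε / 2)).add_const (ε / 2)
  filter_upwards [hdecay.eventually_lt_const (half_lt_self hε), eventually_ge_atTop S]
    with t hlt ht
  rw [dist_eq_norm]
  exact (hbound t ht).trans_lt hlt

theorem tendsto_of_tendsto_smul_deriv_add_smul_add_integrable [CompleteSpace E] {f : ℝ → E} {T : ℝ}
    {l : E} (ha : 0 < a) (hy : ∀ᶠ t in atTop, HasDerivAt y (y' t) t) (hf : ContinuousOn f (Ioi T))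
    (hint : IntegrableOn f (Ioi T))
    (hlim : Tendsto (fun t => t • y' t + a • y t + t • f t) atTop (𝓝 (a • l))) :
    Tendsto y atTop (𝓝 l) := by
  -- `Y = y + ∫ f` absorbs `t • f t`: `t Y' + a Y = (t y' + a y + t f) + a ∫ f`.
  let F : ℝ → E := fun t => ∫ s in T..t, f s
  have hF : Tendsto F atTop (𝓝 (∫ s in Ioi T, f s)) :=
    intervalIntegral_tendsto_integral_Ioi T hint tendsto_id
  have hF' (t : ℝ) (ht : t ∈ Ioi T) : HasDerivAt F (f t) t :=
    intervalIntegral.integral_hasDerivAt_right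
      ((intervalIntegrable_iff_integrableOn_Ioc_of_le (le_of_lt ht)).2
        (hint.mono_set Ioc_subset_Ioi_self))
      (hf.stronglyMeasurableAtFilter isOpen_Ioi t ht) (hf.continuousAt (Ioi_mem_nhds ht))
  have hyF : Tendsto (y + F) atTop (𝓝 (l + ∫ s in Ioi T, f s)) := by
    refine tendsto_of_tendsto_smul_deriv_add_smul (y' := y' + f) ha ?_ ?_
    · filter_upwards [hy, eventually_gt_atTop T] with t hyt ht using hyt.add (hF' t ht)
    · rw [smul_add]
      refine (hlim.add (hF.const_smul a)).congr fun t => ?_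
      simp only [Pi.add_apply]
      module
  simpa using hyF.sub hF

end EulerOperator

/-- The momentum curve `t ẋ + (α - 1) x + t β ∇Φ(x)` of (DIN-AVD), chosen so that its derivative
along a solution is `(β - t) ∇Φ(x)`. -/
noncomputable def dinavdMomentum (α β : ℝ) (Φ : H → ℝ) (x x' : ℝ → H) (t : ℝ) : H :=
  t • x' t + (α - 1) • x t + t • β • gradient Φ (x t)

/-- The Lyapunov function of (DIN-AVD) with respect to the anchor `z`, intended to be a minimizer of
`Φ`: the case `λ = α - 1` of the family
`t (t - β (λ + 2 - α)) (Φ(x) - Φ(z)) + ½ ‖λ (x - z) + t (ẋ + β ∇Φ(x))‖² + ½ λ (α - λ - 1) ‖x - z‖²`.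
-/
noncomputable def dinavdEnergy (α β : ℝ) (Φ : H → ℝ) (x x' : ℝ → H) (z : H) (t : ℝ) : ℝ :=
  t * (t - β) * (Φ (x t) - Φ z) + 1 / 2 * ‖dinavdMomentum α β Φ x x' t - (α - 1) • z‖ ^ 2

/-- The rate at which `dinavdEnergy` decreases at time `t` along a solution passing through `p`. -/
noncomputable def dinavdDissipation (α β : ℝ) (Φ : H → ℝ) (z : H) (t : ℝ) (p : H) : ℝ :=
  (t - β) * ((α - 1) * ⟪p - z, gradient Φ p⟫ + β * t * ‖gradient Φ p‖ ^ 2)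
    - (2 * t - β) * (Φ p - Φ z)

section Energy

variable {α β t₀ t : ℝ} {Φ : H → ℝ} {x x' x'' : ℝ → H} {z : H}

theorem dinavdEnergy_nonneg (ht₀ : 0 ≤ t) (ht : β ≤ t) (hz : Φ z ≤ Φ (x t)) :
    0 ≤ dinavdEnergy α β Φ x x' z t := by
  have := sub_nonneg.2 ht
  have := sub_nonneg.2 hz
  unfold dinavdEnergy
  positivity

theorem mul_inner_le_dinavdDissipation_of_convexOn {s : Set H} {p : H} (hΦ : ConvexOn ℝ s Φ)
    (hp : p ∈ s) (hzs : z ∈ s) (hΦp : DifferentiableAt ℝ Φ p) (hz : Φ z ≤ Φ p)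
    (hβ : 0 ≤ β) (hβt : β ≤ t) (ht : 2 * (α - 2) * β ≤ (α - 3) * t) :
    (α - 3) / 2 * t * ⟪p - z, gradient Φ p⟫ ≤ dinavdDissipation α β Φ z t p := by
  set I := ⟪p - z, gradient Φ p⟫
  have hgap : Φ p - Φ z ≤ I := sub_le_inner_sub_gradient_of_convexOn hΦ hp hzs hΦp
  have hI : 0 ≤ I := by linarith
  have hdamping : 0 ≤ (t - β) * (β * t * ‖gradient Φ p‖ ^ 2) := by
    have := sub_nonneg.2 hβt
    have := hβ.trans hβt
    positivity
  have hvalue : (2 * t - β) * (Φ p - Φ z) ≤ (2 * t - β) * I :=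
    mul_le_mul_of_nonneg_left hgap (by linarith)
  have hcoeff : 0 ≤ ((α - 3) / 2 * t - (α - 2) * β) * I := mul_nonneg (by linarith) hI
  unfold dinavdDissipation
  linarith

theorem mul_norm_gradient_le_dinavdDissipation_of_convexOn {s : Set H} {p : H} {ρ : ℝ}
    (hΦ : ConvexOn ℝ s Φ) (hp : p ∈ s) (hΦp : DifferentiableAt ℝ Φ p) (hρ : 0 ≤ ρ)
    (hball : Metric.closedBall z ρ ⊆ s) (hmin : ∀ q ∈ Metric.closedBall z ρ, Φ q ≤ Φ p)
    (hα : 3 ≤ α) (hβ : 0 ≤ β) (hβt : β ≤ t) (ht : 2 * (α - 2) * β ≤ (α - 3) * t) :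
    (α - 3) / 2 * ρ * (t * ‖gradient Φ p‖) ≤ dinavdDissipation α β Φ z t p := by
  have hz : z ∈ Metric.closedBall z ρ := Metric.mem_closedBall_self hρ
  have hcoeff : 0 ≤ (α - 3) / 2 * t := mul_nonneg (by linarith) (hβ.trans hβt)
  calc (α - 3) / 2 * ρ * (t * ‖gradient Φ p‖) = (α - 3) / 2 * t * (ρ * ‖gradient Φ p‖) := by ring
    _ ≤ (α - 3) / 2 * t * ⟪p - z, gradient Φ p⟫ :=
        mul_le_mul_of_nonneg_left
          (mul_norm_gradient_le_inner_of_convexOn hΦ hp hΦp hρ hball hmin) hcoeff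
    _ ≤ _ :=
        mul_inner_le_dinavdDissipation_of_convexOn hΦ hp (hball hz) hΦp (hmin z hz) hβ hβt ht

namespace IsDINAVDSolution

variable (hsol : IsDINAVDSolution α β t₀ Φ x x' x'')
include hsol

theorem continuousOn_gradient (hΦ : Differentiable ℝ (gradient Φ)) :
    ContinuousOn (fun t => gradient Φ (x t)) (Ici t₀) :=
  hΦ.continuous.comp_continuousOn fun t ht => (hsol.1 t ht).continuousAt.continuousWithinAt

theorem hasDerivAt_momentum (ht₀ : 0 < t₀) (hΦ : Differentiable ℝ (gradient Φ)) (ht : t ∈ Ici t₀) :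
    HasDerivAt (dinavdMomentum α β Φ x x') ((β - t) • gradient Φ (x t)) t := by
  obtain ⟨hx, hx', -, hode⟩ := hsol
  have ht' : t ≠ 0 := (ht₀.trans_le ht).ne'
  have hgrad : HasDerivAt (fun t => gradient Φ (x t)) (fderiv ℝ (gradient Φ) (x t) (x' t)) t :=
    (hΦ (x t)).hasFDerivAt.comp_hasDerivAt t (hx t ht)
  have hx'' : t • x'' t =
      -(α • x' t + t • β • fderiv ℝ (gradient Φ) (x t) (x' t) + t • gradient Φ (x t)) := by
    rw [eq_neg_iff_add_eq_zero, ← smul_zero t, ← hode t ht]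
    simp only [smul_add, smul_smul, mul_div_cancel₀ _ ht', add_assoc]
  refine ((((hasDerivAt_id t).smul (hx' t ht)).add ((hx t ht).const_smul (α - 1))).add
    ((hasDerivAt_id t).smul (hgrad.const_smul β))).congr_deriv ?_
  simp only [id, Pi.smul_apply, hx'']
  module

theorem hasDerivAt_energy (ht₀ : 0 < t₀) (hΦ : Differentiable ℝ Φ)
    (hΦ' : Differentiable ℝ (gradient Φ)) (ht : t ∈ Ici t₀) :
    HasDerivAt (dinavdEnergy α β Φ x x' z) (-dinavdDissipation α β Φ z t (x t)) t := by
  have hgap : HasDerivAt (fun t => Φ (x t) - Φ z) ⟪gradient Φ (x t), x' t⟫ t := by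
    rw [inner_gradient_left]
    exact ((hΦ (x t)).hasFDerivAt.comp_hasDerivAt t (hsol.1 t ht)).sub_const _
  have hweight : HasDerivAt (fun t => t * (t - β)) (1 * (t - β) + t * 1) t :=
    (hasDerivAt_id t).mul ((hasDerivAt_id t).sub_const β)
  have hkinetic := ((hsol.hasDerivAt_momentum ht₀ hΦ' ht).sub_const ((α - 1) • z)).norm_sq
  refine ((hweight.mul hgap).add (hkinetic.const_mul (1 / 2))).congr_deriv ?_
  simp only [dinavdMomentum, dinavdDissipation, inner_sub_left, inner_add_left,
    real_inner_smul_left, real_inner_smul_right, real_inner_self_eq_norm_sq,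
    real_inner_comm (x' t) (gradient Φ (x t))]
  ring

theorem integrableOn_gradient (ht₀ : 0 < t₀) (hΦ : Differentiable ℝ (gradient Φ))
    (hint : IntegrableOn (fun t => t * ‖gradient Φ (x t)‖) (Ioi t₀)) :
    IntegrableOn (fun t => gradient Φ (x t)) (Ioi t₀) :=
  integrableOn_Ioi_of_mul_norm ht₀ (((hsol.continuousOn_gradient hΦ).mono
    Ioi_subset_Ici_self).aestronglyMeasurable measurableSet_Ioi) hint

theorem integrableOn_mul_norm_gradient (hα : 3 < α) (hβ : 0 ≤ β) (ht₀ : 0 < t₀)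
    (hconv : ConvexOn ℝ univ Φ) (hΦ : Differentiable ℝ Φ) (hΦ' : Differentiable ℝ (gradient Φ))
    (hz : z ∈ interior {z : H | ∀ w, Φ z ≤ Φ w}) :
    IntegrableOn (fun t => t * ‖gradient Φ (x t)‖) (Ici t₀) := by
  obtain ⟨ρ, hρ, hball⟩ := Metric.nhds_basis_closedBall.mem_iff.1 (mem_interior_iff_mem_nhds.1 hz)
  have hmin (q : H) : Φ z ≤ Φ q := interior_subset hz q
  have hcont : ContinuousOn (fun t => t * ‖gradient Φ (x t)‖) (Ici t₀) :=
    continuousOn_id.mul (hsol.continuousOn_gradient hΦ').norm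
  let T := max t₀ (max β (2 * (α - 2) * β / (α - 3)))
  have hT₀ : Ici T ⊆ Ici t₀ := Ici_subset_Ici.2 (le_max_left _ _)
  have hTpos {t : ℝ} (ht : t ∈ Ici T) : 0 < t := ht₀.trans_le (hT₀ ht)
  have hTβ {t : ℝ} (ht : t ∈ Ici T) : β ≤ t := ((le_max_left _ _).trans (le_max_right _ _)).trans ht
  have hTα {t : ℝ} (ht : t ∈ Ici T) : 2 * (α - 2) * β ≤ (α - 3) * t :=
    (div_le_iff₀' (sub_pos.2 hα)).1 (((le_max_right _ _).trans (le_max_right _ _)).trans ht)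
  have hc : 0 < (α - 3) / 2 * ρ := mul_pos (half_pos (sub_pos.2 hα)) hρ
  have hdissip : IntegrableOn (fun t => (α - 3) / 2 * ρ * (t * ‖gradient Φ (x t)‖)) (Ioi T) := by
    refine integrableOn_Ioi_of_le_neg_deriv (V := dinavdEnergy α β Φ x x' z)
      (fun t ht => hsol.hasDerivAt_energy ht₀ hΦ hΦ' (hT₀ ht))
      (fun t ht => dinavdEnergy_nonneg (hTpos ht).le (hTβ ht) (hmin _))
      ((hcont.mono hT₀).const_mul _)
      (fun t ht => mul_nonneg hc.le (mul_nonneg (hTpos ht).le (norm_nonneg _))) fun t ht => ?_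
    rw [neg_neg]
    exact mul_norm_gradient_le_dinavdDissipation_of_convexOn hconv (mem_univ _) (hΦ _) hρ.le
      (subset_univ _) (fun q hq => hball hq _) hα.le hβ (hTβ ht) (hTα ht)
  exact integrableOn_Ici_iff_integrableAtFilter_atTop.2
    ⟨⟨Ioi T, Ioi_mem_atTop T, (integrable_const_mul_iff hc.ne'.isUnit _).1 hdissip⟩,
      hcont.locallyIntegrableOn measurableSet_Ici⟩

theorem exists_tendsto_momentum (ht₀ : 0 < t₀) (hΦ : Differentiable ℝ (gradient Φ))
    (hint : IntegrableOn (fun t => t * ‖gradient Φ (x t)‖) (Ioi t₀)) :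
    ∃ l, Tendsto (dinavdMomentum α β Φ x x') atTop (𝓝 l) := by
  have hmeas := ((hsol.continuousOn_gradient hΦ).mono Ioi_subset_Ici_self).aestronglyMeasurable
    (μ := volume) measurableSet_Ioi
  refine ⟨_, tendsto_limUnder_of_hasDerivAt_of_integrableOn_Ioi
    (fun t ht => hsol.hasDerivAt_momentum ht₀ hΦ (Ioi_subset_Ici_self ht)) ?_⟩
  simp only [sub_smul]
  exact ((hsol.integrableOn_gradient ht₀ hΦ hint).smul β).sub
    (integrableOn_Ioi_smul_of_mul_norm ht₀.le hmeas hint)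

theorem exists_tendsto (hα : 1 < α) (ht₀ : 0 < t₀) (hΦ : Differentiable ℝ (gradient Φ))
    (hint : IntegrableOn (fun t => t * ‖gradient Φ (x t)‖) (Ioi t₀)) :
    ∃ l, Tendsto x atTop (𝓝 l) := by
  obtain ⟨m, hm⟩ := hsol.exists_tendsto_momentum ht₀ hΦ hint
  have hcont := (hsol.continuousOn_gradient hΦ).mono Ioi_subset_Ici_self
  refine ⟨(α - 1)⁻¹ • m, tendsto_of_tendsto_smul_deriv_add_smul_add_integrable (sub_pos.2 hα)
    ((eventually_ge_atTop t₀).mono hsol.1) (hcont.const_smul β)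
    ((hsol.integrableOn_gradient ht₀ hΦ hint).smul β) ?_⟩
  rwa [smul_inv_smul₀ (sub_pos.2 hα).ne']

theorem gradient_eq_zero_of_tendsto {l : H} (ht₀ : 0 < t₀) (hΦ : Differentiable ℝ (gradient Φ))
    (hint : IntegrableOn (fun t => t * ‖gradient Φ (x t)‖) (Ioi t₀))
    (hl : Tendsto x atTop (𝓝 l)) : gradient Φ l = 0 := by
  have hgrad := hsol.integrableOn_gradient ht₀ hΦ hint
  refine IntegrableAtFilter.eq_zero_of_tendsto ⟨Ioi t₀, Ioi_mem_atTop t₀, hgrad⟩ (fun s hs => ?_)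
    ((hΦ.continuous.tendsto l).comp hl)
  obtain ⟨b, hb⟩ := mem_atTop_sets.1 hs
  exact measure_mono_top (fun t ht => hb t ht) Real.volume_Ici

end IsDINAVDSolution

end Energy

theorem stmt12_general (α β t₀ : ℝ) (hα : 3 < α) (hβ : 0 ≤ β) (ht₀ : 0 < t₀)
    (Φ : H → ℝ) (hconv : ConvexOn ℝ Set.univ Φ) (hΦ : Differentiable ℝ Φ)
    (hΦ' : Differentiable ℝ (gradient Φ))
    (hint : (interior {z : H | ∀ w, Φ z ≤ Φ w}).Nonempty)
    (x x' x'' : ℝ → H) (hsol : IsDINAVDSolution α β t₀ Φ x x' x'') :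
    (∃ xstar : H, (∀ w, Φ xstar ≤ Φ w) ∧
      Tendsto (fun t => ‖x t - xstar‖) atTop (𝓝 0)) ∧
    IntegrableOn (fun t => t * ‖gradient Φ (x t)‖) (Set.Ici t₀) := by
  obtain ⟨z, hz⟩ := hint
  have hgrad := hsol.integrableOn_mul_norm_gradient hα hβ ht₀ hconv hΦ hΦ' hz
  have hgrad' := hgrad.mono_set Ioi_subset_Ici_self
  obtain ⟨xstar, hlim⟩ := hsol.exists_tendsto (by linarith) ht₀ hΦ' hgrad'
  have hcrit := hsol.gradient_eq_zero_of_tendsto ht₀ hΦ' hgrad' hlim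
  refine ⟨⟨xstar, fun w => ?_, tendsto_iff_norm_sub_tendsto_zero.1 hlim⟩, hgrad⟩
  exact le_of_convexOn_of_gradient_eq_zero hconv (mem_univ _) (mem_univ w) (hΦ xstar) hcrit

theorem stmt12 (α β t₀ : ℝ) (hα : 3 < α) (hβ : 0 < β) (ht₀ : 0 < t₀)
    (Φ : H → ℝ) (hconv : ConvexOn ℝ Set.univ Φ) (hΦ : ContDiff ℝ 2 Φ)
    (hint : (interior {z : H | ∀ w, Φ z ≤ Φ w}).Nonempty)
    (x x' x'' : ℝ → H) (hsol : IsDINAVDSolution α β t₀ Φ x x' x'') :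
    (∃ xstar : H, (∀ w, Φ xstar ≤ Φ w) ∧
      Tendsto (fun t => ‖x t - xstar‖) atTop (𝓝 0)) ∧
    IntegrableOn (fun t => t * ‖gradient Φ (x t)‖) (Set.Ici t₀) :=
  stmt12_general α β t₀ hα hβ.le ht₀ Φ hconv (hΦ.differentiable two_ne_zero)
    (differentiable_gradient_of_contDiff_two hΦ) hint x x' x'' hsol
end
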